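/- Let m > 1 divide n and write n = n₁n₂ where every prime dividing n₁ divides n/m and gcd(n₂, n/m) = 1. Let a ∈ [1,n]^m and c ∈ C(m). Then there exists b ∈ [1,n]^m such that the triple (a, b, c) defines an (n,m)-piecewise affine permutation of [1,n] if and only if every entry a_i of a is relatively prime to n₁; and in that case there are exactly (n/m)^m choices of b for which (a,b,c) is (n,m)-admissible. -/

import Mathlib

/-- `psi k x` is the representative of `x` mod `k` in `[1, k]`. -/
def psi (k x : ℕ) : ℕ := if x % k = 0 then k else x % k

/-- `π` is an `(n,m)`-piecewise affine permutation of `[1,n]` with parameters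
`(a, b, c)`: it permutes `[1,n]` (and is the identity elsewhere), the entries of
`a, b` lie in `[1,n]`, the entries of `c` form a permutation of `[1,m]`, and for
`x ∈ [1,n]` with `Ψ_m(x) = c_i` one has `π(x) = Ψ_n(a_i x + b_i)` and
`Ψ_m(π(x)) = c_{i+1}`, indices cyclic modulo `m`. -/
def IsPAP (n m : ℕ) [NeZero m] (a b c : Fin m → ℕ) (π : ℕ → ℕ) : Prop :=
  Set.BijOn π (Set.Icc 1 n) (Set.Icc 1 n) ∧
  (∀ x : ℕ, x ∉ Set.Icc 1 n → π x = x) ∧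
  (∀ i, a i ∈ Set.Icc 1 n) ∧ (∀ i, b i ∈ Set.Icc 1 n) ∧
  (∀ i, c i ∈ Set.Icc 1 m) ∧ Function.Injective c ∧
  ∀ x ∈ Set.Icc 1 n, ∀ i, psi m x = c i →
    π x = psi n (a i * x + b i) ∧ psi m (π x) = c (i + 1)

/-!
Write `n = m * k`. The map `x ↦ a x + b`, taken modulo `m * k`, is injective on a residue class
`r + mℤ` exactly when `a` is coprime to `k`: two elements of the class differ by some `m t`, and
`m * k ∣ a m t` means `k ∣ a t`. Hence an admissible triple has every `a_i` coprime to `k`. The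
condition `Ψ_m(π(x)) = c_{i+1}` only depends on `x` modulo `m`, so it amounts to the single
congruence `a_i c_i + b_i ≡ c_{i+1}` modulo `m`, which has `k` solutions `b_i ∈ [1, m * k]`.
Conversely, these two conditions make `π` injective: the residue of `π(x)` modulo `m` determines
`i`, and `π` is injective on each piece. Finally, being coprime to `k` and being coprime to `n₁`
are the same, since `n₁` and `k` have the same prime divisors.
-/

section Congruence

variable {a k m x y : ℕ}

lemma coprime_iff_coprime_of_forall_prime_dvd {n₁ n₂ : ℕ} (hdvd : k ∣ n₁ * n₂)
    (hrad : ∀ p : ℕ, p.Prime → p ∣ n₁ → p ∣ k) (hcop : n₂.Coprime k) :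
    a.Coprime n₁ ↔ a.Coprime k := by
  refine ⟨.coprime_dvd_right (hcop.symm.dvd_of_dvd_mul_right hdvd), fun h ↦ ?_⟩
  exact Nat.coprime_of_dvd fun p hp hpa hpn₁ ↦
    Nat.not_coprime_of_dvd_of_dvd hp.one_lt hpa (hrad p hp hpn₁) h

lemma modEq_mul_of_mul_left_modEq (hak : a.Coprime k) (hxy : x ≡ y [MOD m])
    (h : a * x ≡ a * y [MOD m * k]) : x ≡ y [MOD m * k] := by
  rcases eq_or_ne m 0 with rfl | hm
  · simpa using hxy
  obtain ⟨t, ht⟩ := Nat.modEq_iff_dvd.1 hxy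
  rw [Nat.modEq_iff_dvd] at h ⊢
  push_cast at h ⊢
  rw [← mul_sub, ht, mul_left_comm, mul_dvd_mul_iff_left (mod_cast hm)] at h
  rw [ht]
  exact mul_dvd_mul_left _ ((Nat.isCoprime_iff_coprime.2 hak.symm).dvd_of_dvd_mul_left h)

lemma coprime_of_forall_mul_left_modEq {r : ℕ} (hm : 0 < m) (hk : 0 < k)
    (h : ∀ y, y ≡ r [MOD m] → a * y ≡ a * r [MOD m * k] → y ≡ r [MOD m * k]) :
    a.Coprime k := by
  refine Nat.coprime_of_dvd' ?_
  rintro p - ⟨a, rfl⟩ ⟨k, rfl⟩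
  have hmul : p * a * (r + m * k) = p * a * r + m * (p * k) * a := by ring
  have hdvd : m * (p * k) ∣ m * k := by
    rw [← Nat.add_modEq_left_iff (a := r)]
    exact h (r + m * k) (by simp) (by simp [hmul])
  refine Nat.dvd_of_mul_dvd_mul_right (Nat.pos_of_mul_pos_left hk) ?_
  simpa only [one_mul] using Nat.dvd_of_mul_dvd_mul_left hm hdvd

lemma card_Icc_filter_add_modEq (hm : 0 < m) (k s t : ℕ) :
    {b ∈ Finset.Icc 1 (m * k) | s + b ≡ t [MOD m]}.card = k := by
  obtain ⟨v, hv⟩ : ∃ v, s + v ≡ t [MOD m] := by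
    refine ⟨m * s - s + t, ?_⟩
    rw [← add_assoc, Nat.add_sub_cancel' (Nat.le_mul_of_pos_left s hm)]
    simp
  have hiff (b : ℕ) : s + b ≡ t [MOD m] ↔ b ≡ v [MOD m] :=
    ⟨fun h ↦ .add_left_cancel' s (h.trans hv.symm), fun h ↦ (h.add_left s).trans hv⟩
  have hperiodic : Function.Periodic (· ≡ v [MOD m]) (m * k) := fun b ↦ by simp
  calc
    _ = {b ∈ Finset.Ico 1 (1 + m * k) | b ≡ v [MOD m]}.card := by
      simp_rw [hiff, add_comm 1, Finset.Ico_add_one_right_eq_Icc]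
    _ = (m * k).count (· ≡ v [MOD m]) := Nat.filter_Ico_card_eq_of_periodic _ _ _ hperiodic
    _ = k := by simp [Nat.count_modEq_card _ hm, hm]

end Congruence

section Psi

variable {k x y : ℕ}

lemma psi_modEq (k x : ℕ) : psi k x ≡ x [MOD k] := by
  unfold psi
  split_ifs with h
  · simp [Nat.ModEq, h]
  · exact Nat.mod_modEq x k

lemma psi_mem_Icc (hk : 0 < k) (x : ℕ) : psi k x ∈ Set.Icc 1 k := by
  have := Nat.mod_lt x hk
  rw [psi, Set.mem_Icc]
  split_ifs <;> omega

lemma psi_eq_psi_iff : psi k x = psi k y ↔ x ≡ y [MOD k] :=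
  ⟨fun h ↦ (psi_modEq k x).symm.trans (h ▸ psi_modEq k y), fun h ↦ by rw [psi, psi, h]⟩

lemma psi_eq_self (hx : x ∈ Set.Icc 1 k) : psi k x = x := by
  obtain ⟨hx₁, hxk⟩ := hx
  rcases hxk.lt_or_eq with h | rfl
  · rw [psi, Nat.mod_eq_of_lt h, if_neg (by omega)]
  · simp [psi]

lemma psi_eq_iff (hy : y ∈ Set.Icc 1 k) : psi k x = y ↔ x ≡ y [MOD k] := by
  rw [← psi_eq_psi_iff, psi_eq_self hy]

lemma injOn_psi_mul_add_iff {m a : ℕ} (hm : 0 < m) (hk : 0 < k) (b r : ℕ) :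
    Set.InjOn (fun x ↦ psi (m * k) (a * x + b)) {x ∈ Set.Icc 1 (m * k) | x ≡ r [MOD m]} ↔
      a.Coprime k := by
  refine ⟨fun h ↦ ?_, fun hak x hx y hy hxy ↦ ?_⟩
  · have hmem {y : ℕ} (hy : y ≡ r [MOD m]) :
        psi (m * k) y ∈ {x ∈ Set.Icc 1 (m * k) | x ≡ r [MOD m]} :=
      ⟨psi_mem_Icc (by positivity) y, ((psi_modEq _ y).of_mul_right k).trans hy⟩
    have himage (y : ℕ) : psi (m * k) (a * psi (m * k) y + b) = psi (m * k) (a * y + b) :=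
      psi_eq_psi_iff.2 (((psi_modEq _ y).mul_left a).add_right b)
    refine coprime_of_forall_mul_left_modEq (r := r) hm hk fun y hy hay ↦ psi_eq_psi_iff.1 ?_
    refine h (hmem hy) (hmem .rfl) ?_
    simpa only [himage] using psi_eq_psi_iff.2 (hay.add_right b)
  · rw [← psi_eq_self hx.1, ← psi_eq_self hy.1, psi_eq_psi_iff]
    exact modEq_mul_of_mul_left_modEq hak (hx.2.trans hy.2.symm)
      (.add_right_cancel' b (psi_eq_psi_iff.1 hxy))

end Psi

namespace IsPAP

variable {n m k : ℕ} [NeZero m] {a b c : Fin m → ℕ} {π : ℕ → ℕ}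

lemma mul_add_modEq (h : IsPAP n m a b c π) (hmn : m ∣ n) (i : Fin m) :
    a i * c i + b i ≡ c (i + 1) [MOD m] := by
  obtain ⟨-, -, ha, -, hc, -, hπ⟩ := h
  have hmn' : m ≤ n := Nat.le_of_dvd ((ha i).1.trans (ha i).2) hmn
  obtain ⟨hval, hnext⟩ := hπ (c i) ⟨(hc i).1, (hc i).2.trans hmn'⟩ i (psi_eq_self (hc i))
  rw [hval, psi_eq_iff (hc (i + 1))] at hnext
  exact ((psi_modEq n _).of_dvd hmn).symm.trans hnext

lemma coprime (h : IsPAP (m * k) m a b c π) (i : Fin m) : (a i).Coprime k := by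
  obtain ⟨hbij, -, ha, -, hc, -, hπ⟩ := h
  have hk : 0 < k := Nat.pos_of_mul_pos_left ((ha i).1.trans (ha i).2)
  refine (injOn_psi_mul_add_iff (NeZero.pos m) hk (b i) (c i)).1 ?_
  exact (hbij.injOn.mono (Set.sep_subset _ _)).congr fun x hx ↦
    (hπ x hx.1 i ((psi_eq_iff (hc i)).2 hx.2)).1

end IsPAP

section Construction

variable {n m k : ℕ} [NeZero m] {a b c : Fin m → ℕ}

/-- The index `i` of the piece `{x | Ψ_m(x) = c_i}` containing `x`. It is a junk value when
`Ψ_m(x)` is not an entry of `c`, which cannot happen when `c` permutes `[1,m]`. -/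
noncomputable def pieceIndex (c : Fin m → ℕ) (x : ℕ) : Fin m :=
  Function.invFun c (psi m x)

lemma apply_pieceIndex (hc : ∀ i, c i ∈ Set.Icc 1 m) (hcinj : Function.Injective c) (x : ℕ) :
    c (pieceIndex c x) = psi m x := by
  have hsurj : Set.SurjOn c (Finset.univ : Finset (Fin m)) (Finset.Icc 1 m) :=
    Finset.surjOn_of_injOn_of_card_le c (fun i _ ↦ by simpa using hc i) hcinj.injOn (by simp)
  obtain ⟨i, -, hi⟩ := hsurj (by simpa using psi_mem_Icc (NeZero.pos m) x)
  exact Function.invFun_eq ⟨i, hi⟩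

lemma modEq_apply_pieceIndex (hc : ∀ i, c i ∈ Set.Icc 1 m) (hcinj : Function.Injective c)
    (x : ℕ) : x ≡ c (pieceIndex c x) [MOD m] :=
  apply_pieceIndex hc hcinj x ▸ (psi_modEq m x).symm

/-- The map `π` of the triple `(a, b, c)`: it sends `x ∈ [1,n]` to `Ψ_n(a_i x + b_i)`, where `i` is
the index of the piece of `x`, and it fixes everything outside `[1,n]`. -/
noncomputable def piecewiseAffineMap (n : ℕ) (a b c : Fin m → ℕ) (x : ℕ) : ℕ :=
  if x ∈ Set.Icc 1 n then psi n (a (pieceIndex c x) * x + b (pieceIndex c x)) else x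

lemma piecewiseAffineMap_of_mem {x : ℕ} (hx : x ∈ Set.Icc 1 n) :
    piecewiseAffineMap n a b c x = psi n (a (pieceIndex c x) * x + b (pieceIndex c x)) :=
  if_pos hx

lemma mapsTo_piecewiseAffineMap (n : ℕ) (a b c : Fin m → ℕ) :
    Set.MapsTo (piecewiseAffineMap n a b c) (Set.Icc 1 n) (Set.Icc 1 n) := by
  intro x hx
  rw [piecewiseAffineMap_of_mem hx]
  exact psi_mem_Icc (hx.1.trans hx.2) _

lemma psi_piecewiseAffineMap (hmn : m ∣ n) (hc : ∀ i, c i ∈ Set.Icc 1 m)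
    (hcinj : Function.Injective c) (hstep : ∀ i, a i * c i + b i ≡ c (i + 1) [MOD m])
    {x : ℕ} (hx : x ∈ Set.Icc 1 n) :
    psi m (piecewiseAffineMap n a b c x) = c (pieceIndex c x + 1) := by
  rw [piecewiseAffineMap_of_mem hx, psi_eq_iff (hc _)]
  calc
    _ ≡ a (pieceIndex c x) * x + b (pieceIndex c x) [MOD m] := (psi_modEq n _).of_dvd hmn
    _ ≡ a (pieceIndex c x) * c (pieceIndex c x) + b (pieceIndex c x) [MOD m] :=
      ((modEq_apply_pieceIndex hc hcinj x).mul_left _).add_right _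
    _ ≡ c (pieceIndex c x + 1) [MOD m] := hstep _

lemma injOn_piecewiseAffineMap (hc : ∀ i, c i ∈ Set.Icc 1 m) (hcinj : Function.Injective c)
    (hstep : ∀ i, a i * c i + b i ≡ c (i + 1) [MOD m]) (hcop : ∀ i, (a i).Coprime k) :
    Set.InjOn (piecewiseAffineMap (m * k) a b c) (Set.Icc 1 (m * k)) := by
  intro x hx y hy hxy
  have hk : 0 < k := Nat.pos_of_mul_pos_left (hx.1.trans hx.2)
  have hindex : pieceIndex c x = pieceIndex c y := by
    refine add_right_cancel (b := 1) (hcinj ?_)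
    rw [← psi_piecewiseAffineMap (m.dvd_mul_right k) hc hcinj hstep hx, hxy,
      psi_piecewiseAffineMap (m.dvd_mul_right k) hc hcinj hstep hy]
  rw [piecewiseAffineMap_of_mem hx, piecewiseAffineMap_of_mem hy, hindex] at hxy
  refine (injOn_psi_mul_add_iff (NeZero.pos m) hk _ _).2 (hcop (pieceIndex c y)) ⟨hx, ?_⟩
    ⟨hy, modEq_apply_pieceIndex hc hcinj y⟩ hxy
  exact hindex ▸ modEq_apply_pieceIndex hc hcinj x

lemma isPAP_piecewiseAffineMap (ha : ∀ i, a i ∈ Set.Icc 1 (m * k))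
    (hb : ∀ i, b i ∈ Set.Icc 1 (m * k)) (hc : ∀ i, c i ∈ Set.Icc 1 m)
    (hcinj : Function.Injective c) (hstep : ∀ i, a i * c i + b i ≡ c (i + 1) [MOD m])
    (hcop : ∀ i, (a i).Coprime k) :
    IsPAP (m * k) m a b c (piecewiseAffineMap (m * k) a b c) := by
  have hmaps := mapsTo_piecewiseAffineMap (m * k) a b c
  have hinj := injOn_piecewiseAffineMap hc hcinj hstep hcop
  refine ⟨((Set.finite_Icc 1 (m * k)).injOn_iff_bijOn_of_mapsTo hmaps).1 hinj,
    fun x hx ↦ if_neg hx, ha, hb, hc, hcinj, fun x hx i hi ↦ ?_⟩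
  obtain rfl : pieceIndex c x = i := hcinj ((apply_pieceIndex hc hcinj x).trans hi)
  exact ⟨piecewiseAffineMap_of_mem hx,
    psi_piecewiseAffineMap (m.dvd_mul_right k) hc hcinj hstep hx⟩

end Construction

section Offsets

variable {n m k : ℕ} [NeZero m] {a b c : Fin m → ℕ}

/-- The vectors `b ∈ [1,n]^m` for which each `x ↦ a_i x + b_i` sends the residue class of `c_i`
modulo `m` into that of `c_{i+1}`. -/
def compatibleOffsets (n : ℕ) (a c : Fin m → ℕ) : Finset (Fin m → ℕ) :=
  Fintype.piFinset fun i ↦ {t ∈ Finset.Icc 1 n | a i * c i + t ≡ c (i + 1) [MOD m]}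

lemma mem_compatibleOffsets : b ∈ compatibleOffsets n a c ↔
    ∀ i, b i ∈ Set.Icc 1 n ∧ a i * c i + b i ≡ c (i + 1) [MOD m] := by
  simp [compatibleOffsets]

lemma card_compatibleOffsets (k : ℕ) (a c : Fin m → ℕ) :
    (compatibleOffsets (m * k) a c).card = k ^ m := by
  simp [compatibleOffsets, card_Icc_filter_add_modEq (NeZero.pos m)]

lemma exists_isPAP_iff (ha : ∀ i, a i ∈ Set.Icc 1 (m * k)) (hc : ∀ i, c i ∈ Set.Icc 1 m)
    (hcinj : Function.Injective c) :
    (∃ π, IsPAP (m * k) m a b c π) ↔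
      b ∈ compatibleOffsets (m * k) a c ∧ ∀ i, (a i).Coprime k := by
  rw [mem_compatibleOffsets]
  constructor
  · rintro ⟨π, h⟩
    exact ⟨fun i ↦ ⟨h.2.2.2.1 i, h.mul_add_modEq (m.dvd_mul_right k) i⟩, h.coprime⟩
  · rintro ⟨hb, hcop⟩
    exact ⟨_, isPAP_piecewiseAffineMap ha (fun i ↦ (hb i).1) hc hcinj (fun i ↦ (hb i).2) hcop⟩

end Offsets

/-- Given `a` with entries in `[1,n]` and `c` whose entries permute `[1,m]`,
some `b` makes `(a,b,c)` an `(n,m)`-admissible triple iff every `a_i` is coprime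
to `n₁`; in that case there are exactly `(n/m)^m` such choices of `b`. -/
theorem pap_admissible_iff_count (n m n₁ n₂ : ℕ) [NeZero m] (hm : 1 < m) (hmn : m ∣ n)
    (hsplit : n = n₁ * n₂) (hrad : ∀ p : ℕ, p.Prime → p ∣ n₁ → p ∣ n / m)
    (hcop : Nat.Coprime n₂ (n / m))
    (a c : Fin m → ℕ) (ha : ∀ i, a i ∈ Set.Icc 1 n)
    (hc : ∀ i, c i ∈ Set.Icc 1 m) (hcinj : Function.Injective c) :
    ((∃ b : Fin m → ℕ, ∃ π : ℕ → ℕ, IsPAP n m a b c π) ↔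
        ∀ i, Nat.Coprime (a i) n₁) ∧
    ((∀ i, Nat.Coprime (a i) n₁) →
      Set.ncard {b : Fin m → ℕ | ∃ π : ℕ → ℕ, IsPAP n m a b c π} = (n / m) ^ m) := by
  obtain ⟨k, rfl⟩ := hmn
  rw [Nat.mul_div_cancel_left k (NeZero.pos m)] at hrad hcop ⊢
  have hcoprime : (∀ i, (a i).Coprime n₁) ↔ ∀ i, (a i).Coprime k := forall_congr' fun _ ↦
    coprime_iff_coprime_of_forall_prime_dvd (hsplit ▸ k.dvd_mul_left m) hrad hcop
  have hk : 0 < k := Nat.pos_of_mul_pos_left ((ha 0).1.trans (ha 0).2)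
  have hcard := card_compatibleOffsets k a c
  have hnonempty : (compatibleOffsets (m * k) a c).Nonempty :=
    Finset.card_pos.1 (hcard ▸ Nat.pow_pos hk)
  simp only [exists_isPAP_iff ha hc hcinj, exists_and_right, hcoprime]
  refine ⟨and_iff_right hnonempty, fun h ↦ ?_⟩
  simp only [and_iff_left h]
  exact (Set.ncard_coe_finset _).trans hcard
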